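/- arXiv:0903.2864 — 2 statements merged into one kernel-verified Lean document; each statement's English description precedes it below -/
import Mathlib

section
/- Let S_2≀S_k ≤ S_{2k} be the subgroup of permutations mapping each pair {2i−1,2i} (1 ≤ i ≤ k) to some pair {2j−1,2j}, and let Δ_k = {g ∈ S_2≀S_k : sgn(g) = sgn(ḡ)}, where ḡ is the permutation of the k pairs induced by g. Then: (i) for every k ≥ 33, the permutation character of S_{2k} on the cosets of Δ_k is not multiplicity-free; (ii) for k = 32, the permutation character of S_{64} on the cosets of Δ_{32} IS multiplicity-free. -/
/-- The permutation character of `G` on the cosets of `H` is multiplicity-free: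
every irreducible complex representation of `G` has at most a one-dimensional
subspace of `H`-fixed vectors. -/
noncomputable def IsMultFree {G : Type} [Group G] (H : Subgroup G) : Prop :=
  ∀ V : FDRep ℂ G, CategoryTheory.Simple V →
    Module.finrank ℂ (Representation.invariants (V.ρ.comp H.subtype)) ≤ 1

/-- `σ` is the permutation of the `k` pairs `{2i−1, 2i}` of `{1,…,2k}` induced by the
permutation `g` (so `g` maps each pair onto a pair, pair `j` going to pair `σ j`). -/
def InducedPairPerm {k : ℕ} (g : Equiv.Perm (Fin (2 * k))) (σ : Equiv.Perm (Fin k)) : Prop :=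
  ∀ i : Fin (2 * k), ((g i : ℕ) / 2) = (σ ⟨(i : ℕ) / 2, by have := i.isLt; omega⟩ : ℕ)

/-!
Write `W = S₂ ≀ S_k`. The subgroup `Δ` is the kernel of the quadratic character
`χ(g) = sgn(g) sgn(ḡ)` of `W`, so `ℂ[G/Δ]` is the sum of the modules induced from `1` and `χ`. A
double coset `W g W` supports a nonzero homomorphism between these two modules unless there is a
relation `a g = g b` in `W` with `χ(a) = -1`. If every `g` admits such a relation, `Δ`-double cosets
are closed under inversion and Gelfand's trick shows that `ℂ[G/Δ]` is multiplicity-free; otherwise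
the two induced modules share a constituent.

Every double coset of `W` is represented by some `ρ ∈ S_k` acting on the first points of all the
pairs and fixing the second points. If `a` moves the pairs by `σ` and exchanges the points of the
pairs in `F`, a relation `a g = g b` for this `g` means that `F` is a union of cycles of `ρ` off
which `σ` commutes with `ρ`, while `σ` conjugates `ρ` to `ρ⁻¹` on `F`; moreover
`χ(a) = sgn(σ) (-1)^|F|`. Swapping two cycles of the same odd length, or rotating a cycle of even
length, gives `-1` with `F` empty, and a reflection of a cycle of odd length `n` gives
`(-1)^((n+1)/2)`. So `ρ` admits only the value `1` iff its cycle lengths, with fixed points counted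
as cycles of length one, are distinct and all `≡ 3 mod 4`.

Hence `Δ` is multiplicity-free iff `k` is not a sum of distinct numbers `≡ 3 mod 4`. For `k = 32`
the number of parts would be a multiple of four, but `3 + 7 + 11 + 15 = 36`; on the other hand, one
of the sets `{3, 7, 11, k - 21}`, `{3, 7, k - 10}`, `{3, k - 3}` and `{k}` works for each `k ≥ 33`.
-/

open CategoryTheory Representation
open scoped MonoidAlgebra

section Representations

universe u

variable {k G : Type u} [Field k] [Group G]

theorem isIrreducible_of_simple (V : FDRep k G) [Simple V] :
    IsIrreducible (V := V) V.ρ where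
  exists_pair_ne := by
    refine ⟨⊥, ⊤, fun h ↦ id_nonzero V ?_⟩
    ext x
    have hx : x ∈ (⊥ : Subrepresentation (W := V) V.ρ) := h ▸ Submodule.mem_top
    exact hx
  eq_bot_or_eq_top W := by
    let i : FDRep.of W.toRepresentation ⟶ V :=
      { hom := FGModuleCat.ofHom W.toSubmodule.subtype, comm := fun _ ↦ rfl }
    have : Mono i := ⟨fun a b hab ↦ by
      ext x
      exact congrArg (fun t ↦ t.hom.hom.hom x) hab⟩
    by_cases hi : i = 0
    · left
      rw [eq_bot_iff]
      intro x hx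
      exact congrArg (fun t ↦ t.hom.hom.hom (⟨x, hx⟩ : W.toSubmodule)) hi
    · right
      have := (Simple.mono_isIso_iff_nonzero i).2 hi
      rw [eq_top_iff]
      intro x _
      have hx : i.hom.hom.hom ((inv i).hom.hom.hom x) = x :=
        congrArg (fun t ↦ t.hom.hom.hom x) (IsIso.inv_hom_id i)
      rw [← hx]
      exact Subtype.property _

theorem simple_of_isIrreducible [Finite G] [NeZero (Nat.card G : k)] [IsAlgClosed k]
    {U : Type u} [AddCommGroup U] [Module k U] [Module.Finite k U] (ρ : Representation k G U)
    [IsIrreducible ρ] : CategoryTheory.Simple (FDRep.of ρ) := by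
  rw [FDRep.simple_iff_end_is_rank_one, ← (FDRep.forget₂HomLinearEquiv _ _).finrank_eq]
  rw [(Rep.homLinearEquiv _ _).finrank_eq]
  exact Representation.IsIrreducible.finrank_intertwiningMap_self ρ

end Representations

section CornerAlgebra

variable (K : Type*) {R M : Type*} [Field K] [IsAlgClosed K] [Ring R] [Algebra K R]
  [AddCommGroup M] [Module K M] [Module R M] [IsScalarTower K R M] [IsSimpleModule R M]
  [Module.Finite K M]

theorem finrank_range_lsmul_le_one {e : R} (he : IsIdempotentElem e)
    (hcomm : ∀ a b : R, Commute (e * a * e) (e * b * e)) :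
    Module.finrank K (LinearMap.range (Algebra.lsmul K K M e)) ≤ 1 := by
  set W := LinearMap.range (Algebra.lsmul K K M e)
  have smul_mem (a : R) (x : M) : (e * a * e) • x ∈ W :=
    ⟨(a * e) • x, by simp [← mul_smul, mul_assoc]⟩
  by_cases hW : Subsingleton W
  · simp [Module.finrank_zero_of_subsingleton]
  rw [not_subsingleton_iff_nontrivial] at hW
  obtain ⟨⟨u, hu⟩, hu0⟩ := exists_ne (0 : W)
  replace hu0 : u ≠ 0 := by simpa using hu0
  have e_smul {x : M} (hx : x ∈ W) : e • x = x := by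
    obtain ⟨y, rfl⟩ := hx
    simp [← mul_smul, he.eq]
  have corner_u {w : M} (hw : w ∈ W) : ∃ b : R, (e * b * e) • u = w := by
    obtain ⟨b, rfl⟩ := IsSimpleModule.toSpanSingleton_surjective R hu0 w
    exact ⟨b, by simpa [mul_smul, e_smul hu] using e_smul hw⟩
  have corner_scalar (a : R) : ∃ c : K, (e * a * e) • u = c • u := by
    let T : Module.End K W := (Algebra.lsmul K K M (e * a * e)).restrict fun x _ ↦ smul_mem a x
    obtain ⟨c, hc⟩ := Module.End.exists_eigenvalue T
    obtain ⟨⟨v, hv⟩, hTv, hv0⟩ := hc.exists_hasEigenvector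
    replace hTv : (e * a * e) • v = c • v := by
      simpa only [T, Subtype.ext_iff] using! Module.End.mem_eigenspace_iff.1 hTv
    replace hv0 : v ≠ 0 := by simpa using hv0
    obtain ⟨r, hr⟩ := IsSimpleModule.toSpanSingleton_surjective R hv0 u
    have hru : (e * r * e) • v = u := by simpa [mul_smul, e_smul hv, e_smul hu] using congr(e • $hr)
    refine ⟨c, ?_⟩
    rw [← hru, ← mul_smul, (hcomm a r).eq, mul_smul, hTv, smul_comm]
  refine finrank_le_one ⟨u, hu⟩ fun ⟨w, hw⟩ ↦ ?_
  obtain ⟨b, rfl⟩ := corner_u hw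
  obtain ⟨c, hc⟩ := corner_scalar b
  exact ⟨c, Subtype.ext hc.symm⟩

end CornerAlgebra

theorem exists_isCoatom_smul_mk_one_ne_zero {R : Type*} [Ring R] [IsSemisimpleRing R] {r : R}
    (hr : r ≠ 0) : ∃ I : Submodule R R, IsCoatom I ∧ r • (Submodule.Quotient.mk 1 : R ⧸ I) ≠ 0 := by
  by_contra! h
  refine hr ((Submodule.mem_bot R).1 ?_)
  rw [← IsSemisimpleModule.jacobson_eq_bot R R, Module.jacobson, Submodule.mem_sInf]
  intro I hI
  simpa [← Submodule.Quotient.mk_smul] using h I hI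

theorem isIrreducible_ofModule' {k G : Type*} [Field k] [Group G] (M : Type*) [AddCommGroup M]
    [Module k M] [Module k[G] M] [IsScalarTower k k[G] M] [IsSimpleModule k[G] M] :
    IsIrreducible (ofModule' (k := k) (G := G) M) := by
  have asAlgebraHom_eq : (ofModule' M).asAlgebraHom = Algebra.lsmul k k M :=
    (MonoidAlgebra.lift k (Module.End k M) G).apply_symm_apply _
  rw [irreducible_iff_isSimpleModule_asModule]
  exact IsSimpleModule.congr (N := M)
    { (ofModule' (k := k) (G := G) M).asModuleEquiv with
      map_smul' := fun r x ↦ congr($asAlgebraHom_eq r x) }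

section CharIdempotent

variable {A G : Type*} [Group A] [Fintype A] [Group G] (φ : A →* G) (χ : A →* ℤˣ)

/-- The idempotent `|A|⁻¹ ∑ₐ χ(a) φ(a)` of `ℂ[G]` attached to a quadratic character `χ` of `A`; its
image in a `ℂ[G]`-module consists of the vectors on which `A` acts through `χ`. -/
noncomputable def charIdempotent : ℂ[G] :=
  (Fintype.card A : ℂ)⁻¹ • ∑ a, χ a • MonoidAlgebra.single (φ a) (1 : ℂ)

theorem single_mul_charIdempotent (a : A) :
    MonoidAlgebra.single (φ a) 1 * charIdempotent φ χ = χ a • charIdempotent φ χ := by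
  rw [charIdempotent, mul_smul_comm, smul_comm (χ a)]
  congr 1
  rw [Finset.mul_sum, Finset.smul_sum]
  refine Fintype.sum_equiv (Equiv.mulLeft a) _ _ fun b ↦ ?_
  simp [← mul_smul, ← mul_assoc, MonoidAlgebra.single_mul_single]

theorem charIdempotent_mul_single (a : A) :
    charIdempotent φ χ * MonoidAlgebra.single (φ a) 1 = χ a • charIdempotent φ χ := by
  rw [charIdempotent, smul_mul_assoc, smul_comm (χ a)]
  congr 1
  rw [Finset.sum_mul, Finset.smul_sum]
  refine Fintype.sum_equiv (Equiv.mulRight a) _ _ fun b ↦ ?_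
  simp [← mul_smul, mul_comm (χ b), ← mul_assoc, MonoidAlgebra.single_mul_single]

theorem charIdempotent_smul {M : Type*} [AddCommGroup M] [Module ℂ M] [Module ℂ[G] M]
    [IsScalarTower ℂ ℂ[G] M] {x : M}
    (hx : ∀ a, MonoidAlgebra.single (φ a) (1 : ℂ) • x = χ a • x) : charIdempotent φ χ • x = x := by
  have smul_term (a : A) : (χ a • MonoidAlgebra.single (φ a) (1 : ℂ)) • x = x := by
    rw [Units.smul_def, smul_assoc, hx, Units.smul_def, ← mul_smul]
    simp
  rw [charIdempotent, smul_assoc, Finset.sum_smul, Finset.sum_congr rfl fun a _ ↦ smul_term a,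
    Finset.sum_const, Finset.card_univ, ← Nat.cast_smul_eq_nsmul ℂ, inv_smul_smul₀]
  simp

theorem isIdempotentElem_charIdempotent : IsIdempotentElem (charIdempotent φ χ) :=
  charIdempotent_smul φ χ (single_mul_charIdempotent φ χ)

theorem antipode_charIdempotent :
    HopfAlgebra.antipode ℂ (charIdempotent φ χ) = charIdempotent φ χ := by
  simp only [charIdempotent, map_smul, map_sum]
  congr 1
  refine Fintype.sum_equiv (Equiv.inv A) _ _ fun a ↦ ?_
  simp [Units.smul_def]

end CharIdempotent

section Gelfand

variable {G : Type} [Group G] {H : Subgroup G}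

theorem isMultFree_of_commute_corner [Fintype H]
    (hcomm : ∀ a b : ℂ[G], Commute (charIdempotent H.subtype 1 * a * charIdempotent H.subtype 1)
      (charIdempotent H.subtype 1 * b * charIdempotent H.subtype 1)) : IsMultFree H := by
  intro V hV
  have := isIrreducible_of_simple V
  let ρ : Representation ℂ G V := V.ρ
  set e := charIdempotent H.subtype 1
  have invariants_le : invariants (ρ.comp H.subtype) ≤
      (LinearMap.range (Algebra.lsmul ℂ ℂ ρ.asModule e)).map ρ.asModuleEquiv.toLinearMap := by
    intro v hv
    refine ⟨ρ.asModuleEquiv.symm v, ⟨ρ.asModuleEquiv.symm v, ?_⟩, by simp⟩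
    refine charIdempotent_smul H.subtype 1 fun h ↦ ?_
    rw [single_smul, one_smul, MonoidHom.one_apply, one_smul]
    exact congrArg ρ.asModuleEquiv.symm (hv h)
  calc Module.finrank ℂ (invariants (ρ.comp H.subtype))
      ≤ _ := Submodule.finrank_mono invariants_le
    _ = _ := LinearEquiv.finrank_map_eq _ _
    _ ≤ 1 := finrank_range_lsmul_le_one ℂ (isIdempotentElem_charIdempotent _ _) hcomm

variable [Finite G]

theorem isMultFree_of_inv_mem_doubleCoset
    (hinv : ∀ g, ∃ h ∈ H, ∃ h' ∈ H, g⁻¹ = h * g * h') : IsMultFree H := by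
  have := Fintype.ofFinite H
  set e := charIdempotent H.subtype 1 with e_def
  have corner_antipode (a : ℂ[G]) : e * HopfAlgebra.antipode ℂ a * e = e * a * e := by
    induction a using MonoidAlgebra.induction_linear with
    | zero => simp
    | add a b ha hb => simp only [map_add, mul_add, add_mul, ha, hb]
    | single g c =>
      obtain ⟨h, hh, h', hh', hg⟩ := hinv g
      have left : e * MonoidAlgebra.single h 1 = e := by
        simpa using charIdempotent_mul_single H.subtype 1 ⟨h, hh⟩
      have right : MonoidAlgebra.single h' 1 * e = e := by
        simpa using single_mul_charIdempotent H.subtype 1 ⟨h', hh'⟩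
      have : MonoidAlgebra.single g⁻¹ c =
          MonoidAlgebra.single h 1 * MonoidAlgebra.single g c * MonoidAlgebra.single h' 1 := by
        simp [MonoidAlgebra.single_mul_single, hg]
      calc e * HopfAlgebra.antipode ℂ (MonoidAlgebra.single g c) * e
          = (e * MonoidAlgebra.single h 1) * MonoidAlgebra.single g c *
              (MonoidAlgebra.single h' 1 * e) := by
            simp only [MonoidAlgebra.antipode_single, CommSemiring.antipode_eq_id,
              LinearMap.id_apply, this, mul_assoc]
        _ = _ := by rw [left, right]
  have antipode_corner (a : ℂ[G]) : HopfAlgebra.antipode ℂ (e * a * e) = e * a * e := by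
    simp only [HopfAlgebra.antipode_mul_antidistrib, e_def, antipode_charIdempotent]
    simp only [← mul_assoc, corner_antipode, ← e_def]
  have antipode_corner_mul (a b : ℂ[G]) :
      HopfAlgebra.antipode ℂ (e * a * e * (e * b * e)) = e * a * e * (e * b * e) := by
    simpa only [mul_assoc] using antipode_corner (a * e * (e * b))
  refine isMultFree_of_commute_corner fun a b ↦ ?_
  rw [Commute, SemiconjBy, ← antipode_corner_mul, HopfAlgebra.antipode_mul_antidistrib,
    antipode_corner, antipode_corner]

theorem IsMultFree.exists_smul_eq (hH : IsMultFree H) {M : Type} [AddCommGroup M] [Module ℂ M]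
    [Module ℂ[G] M] [IsScalarTower ℂ ℂ[G] M] [Module.Finite ℂ M] [IsSimpleModule ℂ[G] M] {u v : M}
    (hu : ∀ h ∈ H, MonoidAlgebra.single h (1 : ℂ) • u = u)
    (hv : ∀ h ∈ H, MonoidAlgebra.single h (1 : ℂ) • v = v) (hu0 : u ≠ 0) : ∃ c : ℂ, c • u = v := by
  have := isIrreducible_ofModule' (k := ℂ) (G := G) M
  let ρ : Representation ℂ G M := ofModule' M
  have hfin : Module.finrank ℂ (invariants (ρ.comp H.subtype)) ≤ 1 :=
    hH (FDRep.of ρ) (simple_of_isIrreducible ρ)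
  obtain ⟨⟨w, hw⟩, hspan⟩ := finrank_le_one_iff.1 hfin
  obtain ⟨a, ha⟩ := hspan ⟨u, fun h ↦ hu h h.2⟩
  obtain ⟨b, hb⟩ := hspan ⟨v, fun h ↦ hv h h.2⟩
  replace ha : a • w = u := congrArg Subtype.val ha
  replace hb : b • w = v := congrArg Subtype.val hb
  have ha0 : a ≠ 0 := by
    rintro rfl
    exact hu0 (by simp [← ha])
  exact ⟨b * a⁻¹, by rw [← ha, ← hb, smul_smul, inv_mul_cancel_right₀ ha0]⟩

end Gelfand

section QuadraticCharacterKernel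

variable {A G : Type} [Group A] [Group G] {φ : A →* G} {χ : A →* ℤˣ}

theorem isMultFree_map_ker [Finite G] (hinv : ∀ g, ∃ a b, χ a = χ b ∧ g⁻¹ = φ a * g * φ b)
    (hneg : ∀ g, ∃ a b, χ a = -1 ∧ φ a * g = g * φ b) : IsMultFree (χ.ker.map φ) := by
  have neg_neg (g : G) : ∃ a b, χ a = -1 ∧ χ b = -1 ∧ φ a * g = g * φ b := by
    obtain ⟨d, d', hd, hdd'⟩ := hneg g
    obtain hd' | hd' := (Int.units_eq_one_or (χ d')).symm
    · exact ⟨d, d', hd, hd', hdd'⟩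
    obtain ⟨a, b, -, hg⟩ := hinv g
    have swapped : φ (a⁻¹ * d' * a) * g = g * φ (b * d * b⁻¹) := by
      have : φ d' * g⁻¹ = g⁻¹ * φ d := by
        rw [eq_inv_mul_iff_mul_eq, ← mul_assoc, ← hdd', mul_inv_cancel_right]
      rw [hg] at this
      simp only [map_mul, map_inv]
      simpa [mul_assoc] using congr((φ a)⁻¹ * $this * (φ b)⁻¹)
    refine ⟨d * (a⁻¹ * d' * a), d' * (b * d * b⁻¹), by simp [hd, hd'], by simp [hd, hd'], ?_⟩
    rw [map_mul, mul_assoc, swapped, ← mul_assoc, hdd', mul_assoc, ← map_mul]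
  refine isMultFree_of_inv_mem_doubleCoset fun g ↦ ?_
  obtain ⟨a, b, hab, hg⟩ := hinv g
  obtain ha | ha := Int.units_eq_one_or (χ a)
  · exact ⟨φ a, ⟨a, ha, rfl⟩, φ b, ⟨b, hab.symm.trans ha, rfl⟩, hg⟩
  obtain ⟨d, d', hd, hd', hdd'⟩ := neg_neg g
  refine ⟨φ (a * d), ⟨_, ?_, rfl⟩, φ (d'⁻¹ * b), ⟨_, ?_, rfl⟩, ?_⟩
  · simp [MonoidHom.mem_ker, ha, hd]
  · simp [MonoidHom.mem_ker, ← hab, ha, hd']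
  · rw [hg, map_mul, map_mul, map_inv, mul_assoc (φ a), mul_assoc (φ a), hdd']
    group

theorem charIdempotent_mul_single_mul_ne_zero [Fintype A] {g : G}
    (hg : ∀ a b, φ a * g = g * φ b → χ a = 1) :
    charIdempotent φ χ * MonoidAlgebra.single g 1 * charIdempotent φ 1 ≠ 0 := by
  classical
  have expand : charIdempotent φ χ * MonoidAlgebra.single g 1 * charIdempotent φ 1 =
      ((Fintype.card A : ℂ)⁻¹ * (Fintype.card A : ℂ)⁻¹) •
        ∑ p : A × A, MonoidAlgebra.single (φ p.1 * g * φ p.2) (χ p.1 : ℂ) := by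
    simp only [charIdempotent, smul_mul_assoc, mul_smul_comm, Finset.sum_mul, Finset.mul_sum,
      Fintype.sum_prod_type_right]
    simp [Units.smul_def, MonoidAlgebra.single_mul_single, ← Finset.smul_sum, smul_smul]
  have coeff_term (p : A × A) : (MonoidAlgebra.single (φ p.1 * g * φ p.2) (χ p.1 : ℂ)).coeff g =
      if φ p.1 * g * φ p.2 = g then 1 else 0 := by
    rw [MonoidAlgebra.coeff_single, Finsupp.single_apply]
    refine if_ctx_congr Iff.rfl (fun h ↦ ?_) fun _ ↦ rfl
    simp [hg p.1 p.2⁻¹ (by rw [map_inv, eq_mul_inv_iff_mul_eq, h])]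
  have exists_pair : (Finset.univ.filter fun p : A × A ↦ φ p.1 * g * φ p.2 = g).Nonempty :=
    ⟨1, by simp⟩
  intro h0
  have coeff_zero := congr(($h0).coeff g)
  rw [expand, MonoidAlgebra.coeff_smul, MonoidAlgebra.coeff_sum, Finsupp.smul_apply,
    Finsupp.finsetSum_apply, Finset.sum_congr rfl fun p _ ↦ coeff_term p, Finset.sum_boole]
    at coeff_zero
  simp [exists_pair.ne_empty] at coeff_zero

variable [Finite A]

theorem not_isMultFree_map_ker [Finite G] {a₀ : A} (ha₀ : χ a₀ = -1) {g : G}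
    (hg : ∀ a b, φ a * g = g * φ b → χ a = 1) : ¬ IsMultFree (χ.ker.map φ) := by
  intro hmf
  have := Fintype.ofFinite A
  obtain ⟨I, hI, hne⟩ :=
    exists_isCoatom_smul_mk_one_ne_zero (charIdempotent_mul_single_mul_ne_zero hg)
  have : IsSimpleModule ℂ[G] (ℂ[G] ⧸ I) := isSimpleModule_iff_isCoatom.2 hI
  set u : ℂ[G] ⧸ I := charIdempotent φ 1 • Submodule.Quotient.mk 1
  set v : ℂ[G] ⧸ I := charIdempotent φ χ • MonoidAlgebra.single g (1 : ℂ) • u with v_def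
  have hv0 : v ≠ 0 := by simpa [mul_smul, u, v] using hne
  have hu0 : u ≠ 0 := fun h ↦ hv0 (by simp [v, h])
  have single_smul_u (a : A) : MonoidAlgebra.single (φ a) (1 : ℂ) • u = u := by
    simp only [u, ← mul_smul, single_mul_charIdempotent, MonoidHom.one_apply, one_smul]
  have single_smul_v (a : A) : MonoidAlgebra.single (φ a) (1 : ℂ) • v = χ a • v := by
    rw [v_def, ← mul_smul, single_mul_charIdempotent, Units.smul_def, smul_assoc, Units.smul_def]
  obtain ⟨c, hc⟩ : ∃ c : ℂ, c • u = v := by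
    refine hmf.exists_smul_eq ?_ ?_ hu0
    · rintro _ ⟨a, -, rfl⟩
      exact single_smul_u a
    · rintro _ ⟨a, ha, rfl⟩
      rw [single_smul_v, show χ a = 1 from ha, one_smul]
  have : IsAddTorsionFree (ℂ[G] ⧸ I) := .of_isTorsionFree ℂ _
  refine hv0 (self_eq_neg.1 ?_)
  calc v = MonoidAlgebra.single (φ a₀) (1 : ℂ) • c • u := by rw [smul_comm, single_smul_u, hc]
    _ = -v := by rw [hc, single_smul_v, ha₀, Units.neg_smul, one_smul]

theorem isMultFree_map_ker_iff [Finite G] (hχ : ∃ a, χ a = -1)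
    (hinv : ∀ g, ∃ a b, χ a = χ b ∧ g⁻¹ = φ a * g * φ b) :
    IsMultFree (χ.ker.map φ) ↔ ∀ g, ∃ a b, χ a = -1 ∧ φ a * g = g * φ b := by
  refine ⟨fun h g ↦ ?_, isMultFree_map_ker hinv⟩
  obtain ⟨a₀, ha₀⟩ := hχ
  by_contra! hg
  exact not_isMultFree_map_ker ha₀
    (fun a b hab ↦ (Int.units_eq_one_or _).resolve_right fun h ↦ hg a b h hab) h

theorem isMultFree_map_ker_iff_forall_rep [Finite G] (hχ : ∃ a, χ a = -1) {ι : Type*} {r : ι → G}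
    (hr : ∀ g, ∃ p i q, g = φ p * r i * φ q)
    (hinv : ∀ i, ∃ a b, χ a = χ b ∧ (r i)⁻¹ = φ a * r i * φ b) :
    IsMultFree (χ.ker.map φ) ↔ ∀ i, ∃ a b, χ a = -1 ∧ φ a * r i = r i * φ b := by
  rw [isMultFree_map_ker_iff hχ]
  · refine ⟨fun h i ↦ h (r i), fun h g ↦ ?_⟩
    obtain ⟨p, i, q, rfl⟩ := hr g
    obtain ⟨a, b, ha, hab⟩ := h i
    refine ⟨p * a * p⁻¹, q⁻¹ * b * q, by simp [ha], ?_⟩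
    simpa [mul_assoc] using congr(φ p * $hab * φ q)
  · intro g
    obtain ⟨p, i, q, rfl⟩ := hr g
    obtain ⟨a, b, hab, hg⟩ := hinv i
    refine ⟨q⁻¹ * a * p⁻¹, q⁻¹ * b * p⁻¹, by simp [hab], ?_⟩
    simp [hg, mul_assoc]

end QuadraticCharacterKernel

section PairWreath

open Equiv Equiv.Perm Finset

/-- The wreath product `S₂ ≀ Sym(Y)` acting on `Y × Bool`, whose pairs are the sets `{y} × Bool`:
the permutations that permute the pairs, each bundled with the permutation of `Y` it induces. -/
def pairWreath (Y : Type) : Subgroup (Perm (Y × Bool) × Perm Y) where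
  carrier := {p | ∀ x, (p.1 x).1 = p.2 x.1}
  mul_mem' {p q} hp hq x := (hp (q.1 x)).trans (congrArg p.2 (hq x))
  one_mem' _ := rfl
  inv_mem' {p} hp x := by
    have := hp (p.1⁻¹ x)
    rw [Equiv.Perm.inv_def, Equiv.apply_symm_apply] at this
    exact Equiv.Perm.eq_inv_iff_eq.2 this.symm

variable {Y : Type}

/-- The action of `S₂ ≀ Sym(Y)` on a set `X` identified with `Y × Bool`. -/
def pairWreathHom {X : Type} (e : Y × Bool ≃ X) : pairWreath Y →* Perm X :=
  e.permCongrHom.toMonoidHom.comp ((MonoidHom.fst _ _).comp (pairWreath Y).subtype)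

theorem pairWreathHom_apply {X : Type} (e : Y × Bool ≃ X) (p : pairWreath Y) :
    pairWreathHom e p = e.permCongrHom p.1.1 := rfl

/-- The permutation of `Y × Bool` acting as `ρ` on the sheet `Y × {true}` and fixing the sheet
`Y × {false}`. These represent the double cosets of `S₂ ≀ Sym(Y)`. -/
def sheetPerm (ρ : Perm Y) : Perm (Y × Bool) := prodCongrLeft fun e ↦ if e then ρ else 1

/-- `σ` commutes with `ρ` off the `ρ`-invariant set `F` and conjugates `ρ` to `ρ⁻¹` on `F`. This is
the condition for `sheetPerm ρ` to conjugate `pairPerm σ F` into `S₂ ≀ Sym(Y)`. -/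
structure IsReversing (ρ σ : Perm Y) (F : Finset Y) : Prop where
  apply_mem_iff : ∀ y, ρ y ∈ F ↔ y ∈ F
  commute : ∀ y ∉ F, σ (ρ y) = ρ (σ y)
  reverse : ∀ y ∈ F, ρ (σ (ρ y)) = σ y

theorem sheetPerm_apply (ρ : Perm Y) (y : Y) (e : Bool) :
    sheetPerm ρ (y, e) = (if e then ρ y else y, e) := by
  cases e <;> rfl

variable [DecidableEq Y]

/-- The element of `S₂ ≀ Sym(Y)` that moves the pairs by `σ` and exchanges the two points of exactly
the pairs in `F`. -/
def pairPerm (σ : Perm Y) (F : Finset Y) : Perm (Y × Bool) :=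
  prodShear σ fun y ↦ if y ∈ F then boolNot else Equiv.refl Bool

theorem pairPerm_apply (σ : Perm Y) (F : Finset Y) (y : Y) (e : Bool) :
    pairPerm σ F (y, e) = (σ y, if y ∈ F then !e else e) := by
  unfold pairPerm
  split_ifs with hy <;> simp [hy]

theorem pairPerm_mem_pairWreath (σ : Perm Y) (F : Finset Y) :
    (pairPerm σ F, σ) ∈ pairWreath Y := by
  rintro ⟨y, e⟩
  rw [pairPerm_apply]

theorem exists_eq_pairPerm [Finite Y] {p : Perm (Y × Bool) × Perm Y} (hp : p ∈ pairWreath Y) :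
    ∃ F, p.1 = pairPerm p.2 F := by
  have := Fintype.ofFinite Y
  refine ⟨univ.filter fun y ↦ (p.1 (y, false)).2 = true, Equiv.ext fun ⟨y, e⟩ ↦ ?_⟩
  have fst_apply (e : Bool) : (p.1 (y, e)).1 = p.2 y := hp (y, e)
  have snd_ne : (p.1 (y, true)).2 ≠ (p.1 (y, false)).2 := fun h ↦ by
    simpa using p.1.injective (Prod.ext ((fst_apply true).trans (fst_apply false).symm) h)
  refine Prod.ext (by rw [fst_apply, pairPerm_apply]) ?_
  cases e <;> cases h : (p.1 (y, false)).2 <;> simp_all [pairPerm_apply]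

theorem sign_pairPerm [Fintype Y] (σ : Perm Y) (F : Finset Y) :
    sign (pairPerm σ F) = (-1) ^ #F := by
  have factor : pairPerm σ F = prodCongrLeft (fun _ ↦ σ) *
      prodCongrRight fun y ↦ if y ∈ F then boolNot else Equiv.refl Bool := by
    ext x <;> simp [pairPerm, prodShear]
  have sign_flip (y : Y) : sign (if y ∈ F then boolNot else Equiv.refl Bool) =
      if y ∈ F then -1 else 1 := by
    split_ifs
    · decide
    · exact sign_refl
  simp [factor, sign_prodCongrLeft, sign_prodCongrRight, sign_flip]

/-- The quadratic character `sgn(g) sgn(ḡ)` of `S₂ ≀ Sym(Y)`, whose kernel is `Δ`. -/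
def wreathSign (Y : Type) [Fintype Y] [DecidableEq Y] : pairWreath Y →* ℤˣ where
  toFun p := sign p.1.1 * sign p.1.2
  map_one' := by simp
  map_mul' p q := by simp [mul_mul_mul_comm]

theorem wreathSign_apply [Fintype Y] (p : pairWreath Y) :
    wreathSign Y p = sign p.1.1 * sign p.1.2 := rfl

theorem exists_wreathSign_eq_neg_one [Fintype Y] [Nonempty Y] : ∃ p, wreathSign Y p = -1 := by
  obtain ⟨y⟩ := ‹Nonempty Y›
  exact ⟨⟨_, pairPerm_mem_pairWreath 1 {y}⟩, by simp [wreathSign_apply, sign_pairPerm]⟩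

theorem IsReversing.exists_mul_sheetPerm_eq {ρ σ : Perm Y} {F : Finset Y} (h : IsReversing ρ σ F) :
    ∃ σ', pairPerm σ F * sheetPerm ρ = sheetPerm ρ * pairPerm σ' F := by
  refine ⟨σ * ofSubtype (ρ.subtypePerm h.apply_mem_iff), Equiv.ext ?_⟩
  rintro ⟨y, _ | _⟩ <;> by_cases hy : y ∈ F <;>
    simp [sheetPerm_apply, pairPerm_apply, h.apply_mem_iff, hy,
      ofSubtype_apply_of_mem, ofSubtype_apply_of_not_mem, h.commute, h.reverse]

theorem isReversing_of_mul_sheetPerm_eq {ρ σ σ' : Perm Y} {F F' : Finset Y}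
    (h : pairPerm σ F * sheetPerm ρ = sheetPerm ρ * pairPerm σ' F') : IsReversing ρ σ F := by
  have on_false (y : Y) : σ y = (if y ∈ F' then ρ (σ' y) else σ' y) ∧ (y ∈ F ↔ y ∈ F') := by
    simpa [pairPerm_apply, sheetPerm_apply] using congr($h (y, false))
  have on_true (y : Y) : σ (ρ y) = (if y ∈ F' then σ' y else ρ (σ' y)) ∧ (ρ y ∈ F ↔ y ∈ F') := by
    simpa [pairPerm_apply, sheetPerm_apply] using congr($h (y, true))
  refine ⟨fun y ↦ by rw [(on_true y).2, (on_false y).2], fun y hy ↦ ?_, fun y hy ↦ ?_⟩ <;>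
    rw [(on_false y).2] at hy <;> simp [on_true y, on_false y, hy]

end PairWreath

section DoubleCosets

open Equiv Equiv.Perm Finset

theorem not_sameCycle_mul_of_involutive {X : Type*} {m m' : Perm X} (hm : Function.Involutive m)
    (hm' : Function.Involutive m') (hm_ne : ∀ x, m x ≠ x) (hm'_ne : ∀ x, m' x ≠ x) (x : X) :
    ¬ (m * m').SameCycle x (m x) := by
  rintro ⟨n, hn⟩
  have apply_zpow (n : ℤ) (x : X) : m (((m * m') ^ n) x) = ((m * m') ^ (-n)) (m x) := by
    have conj : m * (m * m') * m⁻¹ = (m * m')⁻¹ := by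
      rw [mul_inv_rev, ← mul_assoc, (Perm.ext hm : m * m = 1), one_mul]
      exact congr($(eq_inv_of_mul_eq_one_left (Perm.ext hm' : m' * m' = 1)) * m⁻¹)
    rw [zpow_neg, ← inv_zpow, ← conj, conj_zpow]
    simp
  obtain ⟨j, rfl | rfl⟩ := Int.even_or_odd' n
  · refine hm_ne (((m * m') ^ j) x) ?_
    rw [apply_zpow, ← hn, ← Perm.mul_apply, ← zpow_add, neg_add_eq_iff_eq_add.2 (two_mul j)]
  · refine hm'_ne (((m * m') ^ j) x) (m.injective ?_)
    rw [← Perm.mul_apply, ← Perm.mul_apply, ← zpow_one_add, apply_zpow, ← hn, ← Perm.mul_apply,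
      ← zpow_add, show -j + (2 * j + 1) = 1 + j by ring]

theorem exists_coloring_of_involutive {X : Type*} {m m' : Perm X} (hm : Function.Involutive m)
    (hm' : Function.Involutive m') (hm_ne : ∀ x, m x ≠ x) (hm'_ne : ∀ x, m' x ≠ x) :
    ∃ κ : X → Bool, ∀ x, κ (m x) = !κ x ∧ κ (m' x) = !κ x := by
  classical
  let cyc (x : X) : Quotient (SameCycle.setoid (m * m')) := ⟦x⟧
  have cyc_m' (x : X) : cyc (m' x) = cyc (m x) :=
    Quotient.sound ⟨1, by simp [hm' x]⟩
  have cyc_m_m' (x : X) : cyc (m (m' x)) = cyc x :=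
    Quotient.sound (SameCycle.symm ⟨1, by simp⟩)
  have compare (x : X) : WellOrderingRel (cyc (m x)) (cyc x) ↔
      ¬ WellOrderingRel (cyc x) (cyc (m x)) := by
    refine ⟨asymm, fun h ↦ ((trichotomous_of WellOrderingRel _ _).resolve_left h).resolve_left
      fun h ↦ ?_⟩
    exact not_sameCycle_mul_of_involutive hm hm' hm_ne hm'_ne x (Quotient.exact h)
  -- `m` exchanges the cycles of `m * m'` in pairs: colour the smaller cycle of each pair `true`.
  exact ⟨fun x ↦ decide (WellOrderingRel (cyc x) (cyc (m x))),
    fun x ↦ by simp [hm x, cyc_m', cyc_m_m', compare]⟩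

variable {Y : Type}

theorem pairPerm_empty_mul_sheetPerm_apply [DecidableEq Y] (σ ρ : Perm Y) (y : Y) (e : Bool) :
    (pairPerm σ ∅ * sheetPerm ρ) (y, e) = (σ (if e then ρ y else y), e) := by
  simp [pairPerm_apply, sheetPerm_apply]

theorem exists_pairPerm_one_apply [Finite Y] [DecidableEq Y] {κ : Y × Bool → Bool}
    (hκ : ∀ y, κ (y, true) = !κ (y, false)) : ∃ F, ∀ x, pairPerm 1 F x = (x.1, κ x) := by
  have := Fintype.ofFinite Y
  refine ⟨univ.filter fun y ↦ κ (y, false) = true, ?_⟩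
  rintro ⟨y, e⟩
  cases e <;> cases h : κ (y, false) <;> simp [pairPerm_apply, hκ, h]

theorem exists_eq_pairPerm_empty_mul_sheetPerm [Finite Y] [DecidableEq Y] {h : Perm (Y × Bool)}
    (hh : ∀ x, (h x).2 = x.2) : ∃ σ ρ, h = pairPerm σ ∅ * sheetPerm ρ := by
  have h_mk (y : Y) (e : Bool) : h (y, e) = ((h (y, e)).1, e) := Prod.ext rfl (hh _)
  have inj (e : Bool) : Function.Injective fun y ↦ (h (y, e)).1 := fun y z hyz ↦ by
    have : h (y, e) = h (z, e) := by rw [h_mk y, h_mk z]; exact congr(($hyz, e))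
    simpa using this
  let sheet (e : Bool) : Perm Y := .ofBijective _ (Finite.injective_iff_bijective.1 (inj e))
  refine ⟨sheet false, (sheet false)⁻¹ * sheet true, Equiv.ext ?_⟩
  rintro ⟨y, e⟩
  rw [pairPerm_empty_mul_sheetPerm_apply, h_mk]
  cases e <;> simp [sheet]

theorem exists_eq_mul_sheetPerm_mul [Finite Y] (g : Perm (Y × Bool)) :
    ∃ (p : pairWreath Y) (ρ : Perm Y) (q : pairWreath Y), g = p.1.1 * sheetPerm ρ * q.1.1 := by
  classical
  let flip : Perm (Y × Bool) := prodCongrRight fun _ ↦ boolNot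
  have flip_flip : Function.Involutive flip := fun ⟨y, e⟩ ↦ by simp [flip]
  have flip_ne (x) : flip x ≠ x := fun h ↦ by simpa [flip] using congr(($h).2)
  -- `κ` distinguishes the two points of each pair `P`, and those of each preimage `g⁻¹ P`.
  obtain ⟨κ, hκ⟩ := exists_coloring_of_involutive (m := flip) (m' := g⁻¹ * flip * g) flip_flip
    (fun x ↦ by simp [flip_flip _]) flip_ne fun x h ↦
      flip_ne (g x) (g⁻¹.injective (by simpa using h))
  obtain ⟨F, hF⟩ := exists_pairPerm_one_apply (κ := κ) fun y ↦ (hκ (y, false)).1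
  obtain ⟨F', hF'⟩ := exists_pairPerm_one_apply (κ := κ ∘ ⇑g⁻¹) fun y ↦ by
    simpa [flip] using (hκ (g⁻¹ (y, false))).2
  obtain ⟨σ, ρ, h⟩ := exists_eq_pairPerm_empty_mul_sheetPerm
    (h := pairPerm 1 F' * g * (pairPerm 1 F)⁻¹) fun x ↦ by
      obtain ⟨x, rfl⟩ := (pairPerm 1 F).surjective x
      rw [mul_assoc, Perm.mul_apply, Perm.mul_apply, Perm.inv_def, symm_apply_apply, hF', hF]
      simp
  refine ⟨⟨_, pairPerm_mem_pairWreath 1 F'⟩⁻¹ * ⟨_, pairPerm_mem_pairWreath σ ∅⟩, ρ,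
    ⟨_, pairPerm_mem_pairWreath 1 F⟩, ?_⟩
  change g = (pairPerm 1 F')⁻¹ * pairPerm σ ∅ * sheetPerm ρ * pairPerm 1 F
  rw [mul_assoc (pairPerm 1 F')⁻¹, ← h]
  group

variable [DecidableEq Y] [Fintype Y]

theorem exists_inv_sheetPerm_eq (ρ : Perm Y) : ∃ p q, wreathSign Y p = wreathSign Y q ∧
    (sheetPerm ρ)⁻¹ = p.1.1 * sheetPerm ρ * q.1.1 := by
  obtain ⟨ι, hι⟩ := isConj_iff.1 (isConj_iff_cycleType_eq.2 ρ.cycleType_inv.symm)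
  refine ⟨⟨_, pairPerm_mem_pairWreath ι ∅⟩, ⟨_, pairPerm_mem_pairWreath ι⁻¹ ∅⟩,
    by simp [wreathSign_apply, sign_pairPerm], ?_⟩
  have ι_apply (y : Y) : ι (ρ (ι⁻¹ (ρ y))) = y := by
    simpa using congr($hι (ρ y))
  refine inv_eq_of_mul_eq_one_left (Equiv.ext ?_)
  rintro ⟨y, e⟩
  cases e
  · simp [sheetPerm_apply, pairPerm_apply]
  · simpa [sheetPerm_apply, pairPerm_apply] using ι_apply y

theorem isMultFree_map_ker_wreathSign_iff {X : Type} [Finite X] [Nonempty Y] (e : Y × Bool ≃ X) :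
    IsMultFree ((wreathSign Y).ker.map (pairWreathHom e)) ↔
      ∀ ρ : Perm Y, ∃ σ F, IsReversing ρ σ F ∧ sign σ * (-1) ^ #F = -1 := by
  rw [isMultFree_map_ker_iff_forall_rep exists_wreathSign_eq_neg_one
    (r := fun ρ ↦ e.permCongrHom (sheetPerm ρ))]
  · refine forall_congr' fun ρ ↦ ⟨?_, ?_⟩
    · rintro ⟨p, q, hp, hpq⟩
      obtain ⟨F, hF⟩ := exists_eq_pairPerm p.2
      obtain ⟨F', hF'⟩ := exists_eq_pairPerm q.2
      rw [wreathSign_apply, hF, sign_pairPerm, mul_comm] at hp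
      rw [pairWreathHom_apply, pairWreathHom_apply, ← map_mul, ← map_mul, hF, hF'] at hpq
      exact ⟨p.1.2, F, isReversing_of_mul_sheetPerm_eq (e.permCongrHom.injective hpq), hp⟩
    · rintro ⟨σ, F, hσF, hsign⟩
      obtain ⟨σ', hσ'⟩ := hσF.exists_mul_sheetPerm_eq
      refine ⟨⟨_, pairPerm_mem_pairWreath σ F⟩, ⟨_, pairPerm_mem_pairWreath σ' F⟩, ?_, ?_⟩
      · rw [wreathSign_apply, sign_pairPerm, mul_comm, hsign]
      · simp only [pairWreathHom_apply, ← map_mul, hσ']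
  · intro g
    obtain ⟨p, ρ, q, h⟩ := exists_eq_mul_sheetPerm_mul (e.permCongrHom.symm g)
    refine ⟨p, ρ, q, ?_⟩
    simp only [pairWreathHom_apply, ← map_mul, ← h, MulEquiv.apply_symm_apply]
  · intro ρ
    obtain ⟨p, q, hpq, h⟩ := exists_inv_sheetPerm_eq ρ
    refine ⟨p, q, hpq, ?_⟩
    simp only [pairWreathHom_apply, ← map_mul, ← h, map_inv]

end DoubleCosets

section Reversals

open Equiv Equiv.Perm Finset

variable {Y : Type} {ρ : Perm Y}

theorem exists_involutive_zpow_apply (ρ : Perm Y) (y : Y) : ∃ τ : Perm Y, Function.Involutive τ ∧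
    (∀ i : ℤ, τ ((ρ ^ i) y) = (ρ ^ (-i)) y) ∧ ∀ z, ¬ ρ.SameCycle y z → τ z = z := by
  classical
  let f (z : Y) : Y := if h : ρ.SameCycle y z then (ρ ^ (-h.choose)) y else z
  have f_zpow (i : ℤ) : f ((ρ ^ i) y) = (ρ ^ (-i)) y := by
    have h : ρ.SameCycle y ((ρ ^ i) y) := ⟨i, rfl⟩
    have hj : (ρ ^ h.choose) y = (ρ ^ i) y := h.choose_spec
    simp only [f, dif_pos h]
    calc (ρ ^ (-h.choose)) y = (ρ ^ (-h.choose)) ((ρ ^ (-i)) ((ρ ^ i) y)) := by simp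
      _ = (ρ ^ (-i)) ((ρ ^ (-h.choose)) ((ρ ^ h.choose) y)) := by
        rw [hj, ← Perm.mul_apply, ← Perm.mul_apply (ρ ^ (-i)), zpow_mul_comm]
      _ = (ρ ^ (-i)) y := by simp
  have f_of_not (z : Y) (hz : ¬ ρ.SameCycle y z) : f z = z := dif_neg hz
  have f_f : Function.Involutive f := fun z ↦ by
    by_cases hz : ρ.SameCycle y z
    · obtain ⟨i, rfl⟩ := hz
      rw [f_zpow, f_zpow, neg_neg]
    · rw [f_of_not z hz, f_of_not z hz]
  exact ⟨f_f.toPerm, f_f, f_zpow, f_of_not⟩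

theorem isReversing_empty_iff {σ : Perm Y} :
    IsReversing ρ σ ∅ ↔ σ ∈ Subgroup.centralizer {ρ} := by
  rw [Subgroup.mem_centralizer_singleton_iff]
  exact ⟨fun h ↦ Equiv.ext fun y ↦ h.commute y (notMem_empty y),
    fun h ↦ ⟨by simp, fun y _ ↦ congr($h y), by simp⟩⟩

variable [DecidableEq Y]

theorem sign_eq_neg_one_pow_of_involutive [Fintype Y] {τ : Perm Y} (hτ : Function.Involutive τ) :
    sign τ = (-1) ^ (#τ.support / 2) := by
  rw [sign_of_pow_two_eq_one (Equiv.ext hτ), card_fixedPoints, sum_cycleType,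
    Nat.sub_sub_self (card_le_univ _)]

theorem IsReversing.mul {σ τ : Perm Y} {F O : Finset Y} (hσ : IsReversing ρ σ F)
    (hτ : IsReversing ρ τ O) (hOF : O ⊆ F) (τ_fix : ∀ z ∉ O, τ z = z) :
    IsReversing ρ (σ * τ) (F \ O) := by
  have τ_mem (z : Y) (hz : z ∈ O) : τ z ∈ O := by
    by_contra h
    exact h (by rwa [τ.injective (τ_fix _ h)])
  refine ⟨fun y ↦ by simp [hσ.apply_mem_iff, hτ.apply_mem_iff], fun y hy ↦ ?_, fun y hy ↦ ?_⟩
  · simp only [Perm.mul_apply]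
    by_cases hyO : y ∈ O
    · rw [← hτ.reverse y hyO, hσ.reverse]
      exact hOF (τ_mem _ ((hτ.apply_mem_iff y).2 hyO))
    · have hyF : y ∉ F := by simpa [hyO] using hy
      rw [τ_fix y hyO, τ_fix _ (by rwa [hτ.apply_mem_iff]), hσ.commute y hyF]
  · obtain ⟨hyF, hyO⟩ := mem_sdiff.1 hy
    simp only [Perm.mul_apply]
    rw [τ_fix y hyO, τ_fix _ (by rwa [hτ.apply_mem_iff]), hσ.reverse y hyF]

theorem exists_reflection_of_isCycleOn [Fintype Y] {O : Finset Y} (hO : ρ.IsCycleOn O)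
    (hodd : Odd #O) : ∃ τ : Perm Y, IsReversing ρ τ O ∧ (∀ z ∉ O, τ z = z) ∧
      sign τ * (-1) ^ #O = (-1) ^ ((#O + 1) / 2) := by
  obtain ⟨y, hy⟩ := card_pos.1 hodd.pos
  obtain ⟨τ, τ_inv, τ_zpow, τ_fix⟩ := exists_involutive_zpow_apply ρ y
  have mem_iff (z : Y) : z ∈ O ↔ ρ.SameCycle y z :=
    ⟨fun hz ↦ hO.2 hy hz, fun ⟨i, hi⟩ ↦ hi ▸ (hO.1.perm_zpow i).mapsTo hy⟩
  have support_τ : τ.support = O.erase y := by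
    ext z
    by_cases hz : ρ.SameCycle y z
    · obtain ⟨i, rfl⟩ := hz
      have hcop : IsCoprime (#O : ℤ) 2 := Nat.isCoprime_iff_coprime.2 hodd.coprime_two_right
      have : (ρ ^ (-i)) y = (ρ ^ i) y ↔ (ρ ^ i) y = y := by
        rw [hO.zpow_apply_eq_zpow_apply hy, hO.zpow_apply_eq hy, Int.modEq_iff_dvd,
          sub_neg_eq_add, ← two_mul]
        exact ⟨hcop.dvd_of_dvd_mul_left, (dvd_mul_of_dvd_right · 2)⟩
      simp only [mem_support, τ_zpow, ne_eq, this, mem_erase, mem_iff, SameCycle.refl,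
        sameCycle_zpow_right, and_true]
    · simp [τ_fix z hz, mem_iff, hz]
  refine ⟨τ, ⟨fun z ↦ by rw [mem_iff, mem_iff, sameCycle_apply_right], fun z hz ↦ ?_,
    fun z hz ↦ ?_⟩, fun z hz ↦ τ_fix z (by rwa [← mem_iff]), ?_⟩
  · rw [mem_iff] at hz
    rw [τ_fix z hz, τ_fix _ (by rwa [sameCycle_apply_right])]
  · obtain ⟨i, rfl⟩ := (mem_iff z).1 hz
    rw [← Perm.mul_apply ρ (ρ ^ i), ← zpow_one_add, τ_zpow, τ_zpow, ← Perm.mul_apply,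
      ← zpow_one_add]
    congr 2
    ring
  · rw [sign_eq_neg_one_pow_of_involutive τ_inv, support_τ, card_erase_of_mem hy, ← pow_add]
    obtain ⟨m, hm⟩ := hodd
    rw [hm, Nat.add_sub_cancel, Nat.mul_div_cancel_left m two_pos,
      show m + (2 * m + 1) = 2 * m + (m + 1) by ring, pow_add, pow_mul, neg_one_sq, one_pow,
      one_mul, show (2 * m + 1 + 1) / 2 = m + 1 by lia]

variable [Fintype Y]

theorem exists_isCycleOn_of_mem_cycleType {n : ℕ} (hn : n ∈ ρ.cycleType) :
    ∃ O : Finset Y, ρ.IsCycleOn O ∧ #O = n := by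
  rw [cycleType_def] at hn
  obtain ⟨c, hc, rfl⟩ := Multiset.mem_map.1 hn
  exact ⟨c.support, isCycleOn_support_of_mem_cycleFactorsFinset hc, rfl⟩

theorem exists_isCycleOn_of_mem_support {y : Y} (hy : y ∈ ρ.support) :
    ∃ O : Finset Y, y ∈ O ∧ ρ.IsCycleOn O ∧ #O ∈ ρ.cycleType :=
  have hc := cycleOf_mem_cycleFactorsFinset_iff.2 hy
  ⟨(ρ.cycleOf y).support, mem_support_cycleOf_iff.2 ⟨.refl _ _, hy⟩,
    isCycleOn_support_of_mem_cycleFactorsFinset hc, Multiset.mem_map_of_mem _ hc⟩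

theorem card_mod_four_of_isCycleOn
    (h : ∀ σ F, IsReversing ρ σ F → sign σ * (-1) ^ #F = 1) {O : Finset Y}
    (hO : ρ.IsCycleOn O) (hodd : Odd #O) : #O % 4 = 3 := by
  obtain ⟨τ, hτ, -, hsign⟩ := exists_reflection_of_isCycleOn hO hodd
  rw [h τ O hτ, eq_comm] at hsign
  have := (neg_one_pow_eq_one_iff_even (by decide)).1 hsign
  grind

theorem sign_mul_neg_one_pow_eq_one (hnodup : ρ.cycleType.Nodup)
    (hmod : ∀ n ∈ ρ.cycleType, n % 4 = 3) (hfull : ρ.support = univ) {σ : Perm Y} {F : Finset Y}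
    (h : IsReversing ρ σ F) : sign σ * (-1) ^ #F = 1 := by
  induction F using Finset.strongInduction generalizing σ with | H F ih
  obtain rfl | ⟨y, hy⟩ := F.eq_empty_or_nonempty
  · have even_centralizer : Subgroup.centralizer {ρ} ≤ alternatingGroup Y :=
      centralizer_le_alternating_iff.2 ⟨fun n hn ↦ by grind, by simp [sum_cycleType, hfull],
        Multiset.nodup_iff_count_le_one.1 hnodup⟩
    simpa using even_centralizer (isReversing_empty_iff.1 h)
  obtain ⟨O, hyO, hO, hcard⟩ := exists_isCycleOn_of_mem_support (hfull ▸ mem_univ y)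
  have hcard_mod := hmod _ hcard
  have hOF : O ⊆ F := fun z hz ↦ by
    obtain ⟨i, -, rfl⟩ := hO.exists_pow_eq hyO hz
    have mapsTo : Set.MapsTo ρ F F := fun z hz ↦ (h.apply_mem_iff z).2 hz
    exact mapsTo.perm_pow i hy
  obtain ⟨τ, hτ, τ_fix, hsign⟩ := exists_reflection_of_isCycleOn hO (by grind)
  calc sign σ * (-1) ^ #F
      = sign (σ * τ) * (-1) ^ #(F \ O) * (sign τ * (-1) ^ #O) := by
        rw [Perm.sign_mul, mul_right_comm (sign σ), mul_assoc _ (sign τ), ← mul_assoc (sign τ),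
          Int.units_mul_self, one_mul, mul_assoc, ← pow_add, card_sdiff_add_card_eq_card hOF]
    _ = (-1) ^ ((#O + 1) / 2) := by
        rw [ih _ (sdiff_ssubset hOF ⟨y, hyO⟩) (h.mul hτ hOF τ_fix), one_mul, hsign]
    _ = 1 := Even.neg_one_pow (by grind)

theorem forall_isReversing_iff :
    (∀ σ F, IsReversing ρ σ F → sign σ * (-1) ^ #F = 1) ↔
      ρ.cycleType.Nodup ∧ (∀ n ∈ ρ.cycleType, n % 4 = 3) ∧ ρ.support = univ := by
  refine ⟨fun h ↦ ?_, fun ⟨hnodup, hmod, hfull⟩ _ _ ↦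
    sign_mul_neg_one_pow_eq_one hnodup hmod hfull⟩
  have even_centralizer : Subgroup.centralizer {ρ} ≤ alternatingGroup Y := fun σ hσ ↦ by
    have := h σ ∅ (isReversing_empty_iff.2 hσ)
    simpa using this
  obtain ⟨odd_lengths, -, count_le⟩ := centralizer_le_alternating_iff.1 even_centralizer
  refine ⟨Multiset.nodup_iff_count_le_one.2 count_le, fun n hn ↦ ?_, ?_⟩
  · obtain ⟨O, hO, rfl⟩ := exists_isCycleOn_of_mem_cycleType hn
    exact card_mod_four_of_isCycleOn h hO (odd_lengths _ hn)
  · refine eq_univ_of_forall fun y ↦ mem_support.2 fun hy ↦ ?_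
    have := card_mod_four_of_isCycleOn h (O := {y}) (by simpa using hy) (by simp)
    simp at this

end Reversals

section Lengths

open Equiv Equiv.Perm Finset

theorem exists_full_nodup_cycleType_iff {Y : Type*} [Fintype Y] [DecidableEq Y] :
    (∃ ρ : Perm Y, ρ.cycleType.Nodup ∧ (∀ n ∈ ρ.cycleType, n % 4 = 3) ∧ ρ.support = univ) ↔
      ∃ S : Finset ℕ, (∀ n ∈ S, n % 4 = 3) ∧ ∑ n ∈ S, n = Fintype.card Y := by
  constructor
  · rintro ⟨ρ, hnodup, hmod, hfull⟩
    refine ⟨⟨ρ.cycleType, hnodup⟩, hmod, ?_⟩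
    rw [sum_mk, Multiset.map_id', sum_cycleType, hfull, card_univ]
  · rintro ⟨S, hmod, hsum⟩
    have S_sum : S.val.sum = Fintype.card Y := S.sum_val.trans hsum
    obtain ⟨ρ, hρ⟩ := (exists_with_cycleType_iff Y).2 ⟨S_sum.le, fun n hn ↦ by grind [hmod n hn]⟩
    refine ⟨ρ, hρ ▸ S.nodup, hρ ▸ hmod, ?_⟩
    rw [← card_eq_iff_eq_univ, ← sum_cycleType, hρ, S_sum]

theorem exists_sum_eq_of_le {k : ℕ} (hk : 33 ≤ k) :
    ∃ S : Finset ℕ, (∀ n ∈ S, n % 4 = 3) ∧ ∑ n ∈ S, n = k := by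
  obtain h | h | h | h : k % 4 = 0 ∨ k % 4 = 1 ∨ k % 4 = 2 ∨ k % 4 = 3 := by lia
  · refine ⟨{3, 7, 11, k - 21}, by grind, ?_⟩
    repeat rw [sum_insert (by grind)]
    grind
  · refine ⟨{3, 7, k - 10}, by grind, ?_⟩
    repeat rw [sum_insert (by grind)]
    grind
  · refine ⟨{3, k - 3}, by grind, ?_⟩
    repeat rw [sum_insert (by grind)]
    grind
  · exact ⟨{k}, by simpa using h, sum_singleton _ _⟩

theorem sum_ne_thirty_two {S : Finset ℕ} (hS : ∀ n ∈ S, n % 4 = 3) : ∑ n ∈ S, n ≠ 32 := by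
  have sum_ne : ∀ S ∈ (range 33 |>.filter (· % 4 = 3)).powerset, ∑ n ∈ S, n ≠ 32 := by
    decide +kernel
  intro h
  refine sum_ne S (mem_powerset.2 fun n hn ↦ mem_filter.2 ⟨mem_range.2 ?_, hS n hn⟩) h
  grind [single_le_sum (fun i _ ↦ Nat.zero_le i) hn]

end Lengths

section Pairs

open Equiv Equiv.Perm

/-- The bijection with `Fin (2 * k)` under which the pair `{y} × Bool` becomes `{2y, 2y + 1}`. -/
def pairEquiv (k : ℕ) : Fin k × Bool ≃ Fin (2 * k) :=
  ((Equiv.refl (Fin k)).prodCongr finTwoEquiv.symm).trans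
    (finProdFinEquiv.trans (finCongr (mul_comm k 2)))

theorem pairEquiv_div_two {k : ℕ} (x : Fin k × Bool) : (pairEquiv k x : ℕ) / 2 = x.1 := by
  have := (finTwoEquiv.symm x.2).isLt
  simp [pairEquiv]
  omega

theorem inducedPairPerm_permCongr_iff {k : ℕ} {g : Perm (Fin k × Bool)} {σ : Perm (Fin k)} :
    InducedPairPerm ((pairEquiv k).permCongr g) σ ↔ (g, σ) ∈ pairWreath (Fin k) := by
  refine (pairEquiv k).forall_congr_right.symm.trans (forall_congr' fun x ↦ ?_)
  simp [pairEquiv_div_two, Fin.ext_iff]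

theorem mem_map_ker_wreathSign_iff {k : ℕ} {g : Perm (Fin (2 * k))} :
    g ∈ (wreathSign (Fin k)).ker.map (pairWreathHom (pairEquiv k)) ↔
      ∃ σ : Perm (Fin k), InducedPairPerm g σ ∧ sign g = sign σ := by
  constructor
  · rintro ⟨p, hp, rfl⟩
    refine ⟨p.1.2, inducedPairPerm_permCongr_iff.2 p.2, ?_⟩
    exact (sign_permCongr _ _).trans ((mul_eq_one_iff_eq_inv.1 hp).trans (Int.units_inv_eq_self _))
  · rintro ⟨σ, hσ, hsign⟩
    obtain ⟨g, rfl⟩ := (pairEquiv k).permCongr.surjective g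
    refine ⟨⟨(g, σ), inducedPairPerm_permCongr_iff.1 hσ⟩, ?_, rfl⟩
    rw [sign_permCongr] at hsign
    rw [SetLike.mem_coe, MonoidHom.mem_ker, wreathSign_apply, hsign, Int.units_mul_self]

theorem stmt14_general {k : ℕ} (hk : k ≠ 0) {H : Subgroup (Perm (Fin (2 * k)))}
    (hH : ∀ g, g ∈ H ↔ ∃ σ : Perm (Fin k), InducedPairPerm g σ ∧ sign g = sign σ) :
    IsMultFree H ↔ ∀ S : Finset ℕ, (∀ n ∈ S, n % 4 = 3) → ∑ n ∈ S, n ≠ k := by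
  have : NeZero k := ⟨hk⟩
  obtain rfl : H = (wreathSign (Fin k)).ker.map (pairWreathHom (pairEquiv k)) :=
    Subgroup.ext fun g ↦ (hH g).trans mem_map_ker_wreathSign_iff.symm
  rw [isMultFree_map_ker_wreathSign_iff, ← not_iff_not]
  calc (¬ ∀ ρ : Perm (Fin k), ∃ σ F, IsReversing ρ σ F ∧ sign σ * (-1) ^ F.card = -1)
      ↔ ∃ ρ : Perm (Fin k), ∀ σ F, IsReversing ρ σ F → sign σ * (-1) ^ F.card = 1 := by
        simp only [not_forall, not_exists, not_and, Int.units_ne_iff_eq_neg, neg_neg]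
    _ ↔ ∃ S : Finset ℕ, (∀ n ∈ S, n % 4 = 3) ∧ ∑ n ∈ S, n = k := by
        simp only [forall_isReversing_iff, exists_full_nodup_cycleType_iff, Fintype.card_fin]
    _ ↔ _ := by push Not; rfl

end Pairs

theorem stmt14 :
    (∀ k : ℕ, 33 ≤ k →
      ∀ H : Subgroup (Equiv.Perm (Fin (2 * k))),
        (∀ g : Equiv.Perm (Fin (2 * k)), g ∈ H ↔
          ∃ σ : Equiv.Perm (Fin k), InducedPairPerm g σ ∧
            Equiv.Perm.sign g = Equiv.Perm.sign σ) →
        ¬ IsMultFree H) ∧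
    (∀ H : Subgroup (Equiv.Perm (Fin (2 * 32))),
      (∀ g : Equiv.Perm (Fin (2 * 32)), g ∈ H ↔
        ∃ σ : Equiv.Perm (Fin 32), InducedPairPerm g σ ∧
          Equiv.Perm.sign g = Equiv.Perm.sign σ) →
      IsMultFree H) :=
  ⟨fun _ hk _ hH h ↦
    have ⟨S, hS, hsum⟩ := exists_sum_eq_of_le hk
    (stmt14_general (by lia) hH).1 h S hS hsum,
  fun _ hH ↦ (stmt14_general (by lia) hH).2 fun _ ↦ sum_ne_thirty_two⟩
end

section
/- Let F be an algebraically closed field, let G be a finite group, and let M be a nonzero finite-dimensional FG-module which is indecomposable and satisfies: (a) M has a unique simple submodule, and this submodule is isomorphic to the trivial one-dimensional module F; M has a unique maximal (proper) submodule, and the quotient of M by it is isomorphic to the trivial module F; (b) in a composition series of M the trivial module F occurs exactly twice as a composition factor. Then the endomorphism algebra End_{FG}(M) has dimension exactly 2 over F. -/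
/-!
Let `π : M → T` be the projection onto the head and `ι : T → M` the inclusion of the socle, where
`T` is their common isomorphism type. Since `T` has only scalar endomorphisms, `Hom(M, T) = F π` and
`Hom(T, M) = F ι`. For an endomorphism `φ` of `M` we thus have `π ∘ φ = c π` for some scalar `c`, so
`ψ = φ - c` has image inside `ker π`. If `ψ` did not kill `ker π`, the chain
`0 < im ι ≤ ψ (ker π) < im ψ ≤ ker π < M` would exhibit three factors isomorphic to `T`. Hence `ψ`
factors through `π` and is a multiple of `ι ∘ π`. Finally `π ∘ ι = 0`, since otherwise `ker π = 0`
and `M` is simple. So `id` and `ι ∘ π` form a basis of the endomorphism algebra.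
-/

open LinearMap JordanHolderLattice

section Lattice

variable {X : Type*} [Lattice X]

theorem sup_eq_of_covBy_of_not_le {a b c : X} (hab : a ⋖ b) (hcb : c ≤ b) (hca : ¬ c ≤ a) :
    a ⊔ c = b :=
  (hab.eq_or_eq le_sup_left (sup_le hab.le hcb)).resolve_left (hca <| sup_eq_left.mp ·)

theorem le_of_existsUnique_isAtom [OrderBot X] [IsAtomic X] (h : ∃! x : X, IsAtom x) {a x : X}
    (ha : IsAtom a) (hx : x ≠ ⊥) : a ≤ x := by
  obtain ⟨y, hy, hyx⟩ := (eq_bot_or_exists_atom_le x).resolve_left hx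
  exact h.unique ha hy ▸ hyx

theorem le_of_existsUnique_isCoatom [OrderTop X] [IsCoatomic X] (h : ∃! x : X, IsCoatom x)
    {a x : X} (ha : IsCoatom a) (hx : x ≠ ⊤) : x ≤ a := by
  obtain ⟨y, hy, hxy⟩ := (eq_top_or_exists_le_coatom x).resolve_left hx
  exact h.unique ha hy ▸ hxy

theorem exists_step_iso_of_covBy [IsModularLattice X] (s : CompositionSeries X) {a b : X}
    (hab : a ⋖ b) (ha : s.head ≤ a) (hb : b ≤ s.last) :
    ∃ i : Fin s.length, Iso (s i.castSucc, s i.succ) (a, b) ∧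
      s i.succ ⊓ a ≤ s i.castSucc ∧ ¬ s i.succ ⊓ b ≤ s i.castSucc := by
  -- The first step of `s` that meets `b` outside `a`: there `s i.succ ⊓ b` covers both
  -- `s i.castSucc ⊓ b` and `a ⊓ s i.succ`, which coincide.
  obtain ⟨i, hi, hi'⟩ : ∃ i : Fin s.length, s i.castSucc ⊓ b ≤ a ∧ ¬ s i.succ ⊓ b ≤ a := by
    by_contra! hstep
    have hle (j : Fin (s.length + 1)) : s j ⊓ b ≤ a := by
      induction j using Fin.induction with
      | zero => exact inf_le_left.trans ha
      | succ i ih => exact hstep i ih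
    exact hab.lt.not_ge ((le_inf hb le_rfl).trans (hle (Fin.last _)))
  have hcov : s i.castSucc ⋖ s i.succ := s.step i
  have hisb : ¬ s i.succ ⊓ b ≤ s i.castSucc := fun h => hi' ((le_inf h inf_le_right).trans hi)
  have hisa : s i.succ ⊓ a ≤ s i.castSucc := by
    by_contra h
    refine hi' ?_
    calc s i.succ ⊓ b = (s i.succ ⊓ a ⊔ s i.castSucc) ⊓ b := by
          rw [sup_comm, sup_eq_of_covBy_of_not_le hcov inf_le_left h]
      _ = s i.succ ⊓ a ⊔ s i.castSucc ⊓ b := sup_inf_assoc_of_le _ (inf_le_right.trans hab.le)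
      _ ≤ a := sup_le inf_le_right hi
  have hinf : s i.castSucc ⊓ (s i.succ ⊓ b) = a ⊓ (s i.succ ⊓ b) :=
    le_antisymm (le_inf ((inf_le_inf_left _ inf_le_right).trans hi) inf_le_right)
      (le_inf ((le_inf (inf_le_right.trans inf_le_left) inf_le_left).trans hisa) inf_le_right)
  have hsup : s i.castSucc ⊔ s i.succ ⊓ b = s i.succ :=
    sup_eq_of_covBy_of_not_le hcov inf_le_left hisb
  have hsup' : a ⊔ s i.succ ⊓ b = b := sup_eq_of_covBy_of_not_le hab inf_le_right hi'
  have hiso : Iso (s i.castSucc, s i.succ) (s i.castSucc ⊓ (s i.succ ⊓ b), s i.succ ⊓ b) := by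
    simpa only [hsup] using second_iso (x := s i.castSucc) (y := s i.succ ⊓ b) (hsup.symm ▸ hcov)
  have hiso' : Iso (a, b) (a ⊓ (s i.succ ⊓ b), s i.succ ⊓ b) := by
    simpa only [hsup'] using second_iso (x := a) (y := s i.succ ⊓ b) (hsup'.symm ▸ hab)
  exact ⟨i, iso_trans (hinf ▸ hiso) (iso_symm hiso'), hisa, hisb⟩

end Lattice

section Multiplicity

variable {A M N T : Type*} [Ring A] [AddCommGroup M] [Module A M] [AddCommGroup N] [Module A N]
  [AddCommGroup T] [Module A T]

variable (T) in
/-- The factor module `b / a` of a step `a ≤ b` in a filtration of `M` is isomorphic to `T`. As `a`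
is pulled back to `b` before taking the quotient, for arbitrary `a` and `b` this is about
`b / (a ⊓ b)`. -/
def HasFactor (a b : Submodule A M) : Prop :=
  Nonempty ((b ⧸ a.comap b.subtype) ≃ₗ[A] T)

variable (T) in
/-- The multiplicity of `T` among the factors of the composition series `s`. It is attached to a
series, which need not run from `⊥` to `⊤`. -/
noncomputable def compositionMultiplicity (s : CompositionSeries (Submodule A M)) : ℕ :=
  Nat.card {i : Fin s.length // HasFactor T (s i.castSucc) (s i.succ)}

theorem covBy_of_hasFactor [IsSimpleModule A T] {a b : Submodule A M} (hab : a ≤ b)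
    (h : HasFactor T a b) : a ⋖ b :=
  (covBy_iff_quot_is_simple hab).mpr (.congr h.some)

theorem le_compositionMultiplicity [IsSimpleModule A T] (s : CompositionSeries (Submodule A M))
    {n : ℕ} {a b : Fin n → Submodule A M} (ha : ∀ j, s.head ≤ a j) (hb : ∀ j, b j ≤ s.last)
    (hab : ∀ j, a j ≤ b j) (hchain : ∀ j k, j < k → b j ≤ a k) (hT : ∀ j, HasFactor T (a j) (b j)) :
    n ≤ compositionMultiplicity T s := by
  choose i hiso hia hib using fun j =>
    exists_step_iso_of_covBy s (covBy_of_hasFactor (hab j) (hT j)) (ha j) (hb j)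
  have hne (j k : Fin n) (hjk : j < k) : i j ≠ i k := fun h =>
    hib j ((inf_le_inf_left _ (hchain j k hjk)).trans (h ▸ hia k))
  let f (j : Fin n) : {i : Fin s.length // HasFactor T (s i.castSucc) (s i.succ)} :=
    ⟨i j, (hT j).map (hiso j).linearEquiv.trans⟩
  have hf : Function.Injective f := fun j k h => by
    by_contra hjk
    have hi : i j = i k := congrArg Subtype.val h
    exact (lt_or_gt_of_ne hjk).elim (hne j k · hi) (hne k j · hi.symm)
  simpa [compositionMultiplicity] using Nat.card_le_card_of_injective f hf

theorem compositionMultiplicity_le_one [IsSimpleModule A M]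
    (s : CompositionSeries (Submodule A M)) : compositionMultiplicity T s ≤ 1 := by
  have hbot (i : Fin s.length) : s i.castSucc = ⊥ :=
    (eq_bot_or_eq_top _).resolve_right (s.lt_succ i).ne_top
  have : Subsingleton (Fin s.length) :=
    ⟨fun i j => Fin.castSucc_injective _ (s.injective ((hbot i).trans (hbot j).symm))⟩
  exact Finite.card_le_one_iff_subsingleton.mpr inferInstance

theorem exists_comp_eq_of_ker_le_ker {π : M →ₗ[A] T} (hπ : Function.Surjective π) {f : M →ₗ[A] N}
    (h : ker π ≤ ker f) : ∃ g : T →ₗ[A] N, g ∘ₗ π = f := by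
  refine ⟨(ker π).liftQ f h ∘ₗ (π.quotKerEquivOfSurjective hπ).symm, LinearMap.ext fun x => ?_⟩
  have hx : (π.quotKerEquivOfSurjective hπ).symm (π x) = Submodule.Quotient.mk x :=
    (LinearEquiv.symm_apply_eq _).mpr rfl
  simp [hx]

theorem hasFactor_map_ker_range {π : M →ₗ[A] T} (hπ : Function.Surjective π) {f : M →ₗ[A] N}
    (h : ker f ≤ ker π) : HasFactor T ((ker π).map f) (range f) := by
  obtain ⟨g, hg⟩ := exists_comp_eq_of_ker_le_ker f.surjective_rangeRestrict
    ((ker_rangeRestrict f).trans_le h)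
  have hg' (m : M) : g ⟨f m, m, rfl⟩ = π m := congr($hg m)
  have hsurj : Function.Surjective g := .of_comp (g := f.rangeRestrict) (by rwa [← coe_comp, hg])
  have hker : ((ker π).map f).comap (range f).subtype = ker g := by
    ext ⟨_, m, rfl⟩
    constructor
    · rintro ⟨p, hp : π p = 0, hpm : f p = f m⟩
      simpa only [mem_ker, ← hpm, hg'] using hp
    · intro hm
      exact ⟨m, (hg' m).symm.trans hm, rfl⟩
  exact ⟨(Submodule.quotEquivOfEq _ _ hker).trans (g.quotKerEquivOfSurjective hsurj)⟩

theorem hasFactor_bot_range {ι : T →ₗ[A] M} (hι : Function.Injective ι) :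
    HasFactor T ⊥ (range ι) := by
  simpa using hasFactor_map_ker_range (π := LinearMap.id) Function.surjective_id
    (ker_eq_bot.mpr hι).le

theorem hasFactor_ker_top {π : M →ₗ[A] T} (hπ : Function.Surjective π) :
    HasFactor T (ker π) ⊤ := by
  simpa using hasFactor_map_ker_range (f := LinearMap.id) hπ (by simp)

theorem ker_le_ker_of_comp_eq_zero [IsSimpleModule A T] {π : M →ₗ[A] T}
    (hπ : Function.Surjective π) (hhead : ∀ N : Submodule A M, N ≠ ⊤ → N ≤ ker π)
    {ι : T →ₗ[A] M} (hι : Function.Injective ι) (hsoc : ∀ N : Submodule A M, N ≠ ⊥ → range ι ≤ N)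
    (s : CompositionSeries (Submodule A M)) (h0 : s.head = ⊥) (h1 : s.last = ⊤)
    (hs : compositionMultiplicity T s ≤ 2) {ψ : M →ₗ[A] M} (hψ : π ∘ₗ ψ = 0) :
    ker π ≤ ker ψ := by
  by_contra h
  have hmap : (ker π).map ψ ≠ ⊥ := mt le_ker_iff_map.mpr h
  have hker : ker ψ ≤ ker π := hhead _ fun htop => h (htop ▸ le_top)
  have hrange : range ψ ≤ ker π := range_le_ker_iff.mpr hψ
  have hcount : 3 ≤ compositionMultiplicity T s :=
    le_compositionMultiplicity s (a := ![⊥, (ker π).map ψ, ker π]) (b := ![range ι, range ψ, ⊤])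
      (fun _ => h0.trans_le bot_le) (fun _ => le_top.trans_eq h1.symm)
      (by simp [Fin.forall_fin_succ, map_le_range])
      (by simp [Fin.forall_fin_succ, hsoc _ hmap, hrange,
        (hsoc _ hmap).trans (map_le_range.trans hrange)])
      (by simp [Fin.forall_fin_succ, hasFactor_bot_range hι, hasFactor_map_ker_range hπ hker,
        hasFactor_ker_top hπ])
  omega

theorem comp_eq_zero_of_one_lt_compositionMultiplicity [IsSimpleModule A T] {π : M →ₗ[A] T}
    (hπ : Function.Surjective π) {ι : T →ₗ[A] M}
    (hsoc : ∀ N : Submodule A M, N ≠ ⊥ → range ι ≤ N)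
    (s : CompositionSeries (Submodule A M)) (hs : 1 < compositionMultiplicity T s) :
    π ∘ₗ ι = 0 := by
  by_contra h
  have hker : ker π = ⊥ := by
    by_contra hbot
    exact h (range_le_ker_iff.mp (hsoc _ hbot))
  have : IsSimpleModule A M := .congr (.ofBijective π ⟨ker_eq_bot.mp hker, hπ⟩)
  exact hs.not_ge (compositionMultiplicity_le_one s)

end Multiplicity

section ScalarEndomorphisms

theorem algebraMap_end_surjective_of_finrank_eq_one {F A T : Type*} [Field F] [Ring A]
    [Algebra F A] [AddCommGroup T] [Module A T] [Module F T] [IsScalarTower F A T]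
    (h : Module.finrank F T = 1) : Function.Surjective (algebraMap F (Module.End A T)) := by
  intro f
  obtain ⟨c, hc, -⟩ := (f.restrictScalars F).existsUnique_eq_smul_id_of_finrank_eq_one h
  exact ⟨c, (restrictScalars_injective F hc).symm⟩

variable {F A M T : Type*} [Field F] [Ring A] [Algebra F A] [AddCommGroup M] [Module A M]
  [AddCommGroup T] [Module A T] [Module F T] [IsScalarTower F A T] [IsSimpleModule A T]

theorem exists_eq_smul_of_forall_le_ker (hT : Function.Surjective (algebraMap F (Module.End A T)))
    {π : M →ₗ[A] T} (hπ : Function.Surjective π)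
    (hhead : ∀ N : Submodule A M, N ≠ ⊤ → N ≤ ker π) (f : M →ₗ[A] T) : ∃ c : F, f = c • π := by
  obtain rfl | hf := eq_or_ne f 0
  · exact ⟨0, (zero_smul F π).symm⟩
  have hcoatom : IsCoatom (ker f) := isCoatom_ker_of_surjective (surjective_of_ne_zero hf)
  have hker : ker π = ker f :=
    (hcoatom.le_iff_eq (isCoatom_ker_of_surjective hπ).1).mp (hhead _ hcoatom.1)
  obtain ⟨g, rfl⟩ := exists_comp_eq_of_ker_le_ker hπ hker.le
  obtain ⟨c, rfl⟩ := hT g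
  exact ⟨c, rfl⟩

variable [Module F M] [IsScalarTower F A M]

theorem exists_eq_smul_of_forall_range_le (hT : Function.Surjective (algebraMap F (Module.End A T)))
    {ι : T →ₗ[A] M} (hι : Function.Injective ι)
    (hsoc : ∀ N : Submodule A M, N ≠ ⊥ → range ι ≤ N) (f : T →ₗ[A] M) : ∃ c : F, f = c • ι := by
  obtain rfl | hf := eq_or_ne f 0
  · exact ⟨0, (zero_smul F ι).symm⟩
  have isAtom_range {g : T →ₗ[A] M} (hg : Function.Injective g) : IsAtom (range g) :=
    isSimpleModule_iff_isAtom.mp (.congr (LinearEquiv.ofInjective g hg).symm)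
  have hatom : IsAtom (range f) := isAtom_range (injective_of_ne_zero hf)
  have hrange : range ι = range f :=
    (hatom.le_iff_eq (isAtom_range hι).1).mp (hsoc _ hatom.1)
  have hmem (x : T) : f x ∈ range ι := hrange ▸ mem_range_self f x
  obtain ⟨c, hc⟩ := hT (f.codLift ι hι hmem)
  refine ⟨c, ?_⟩
  calc f = ι ∘ₗ f.codLift ι hι hmem := (comp_codLift f ι hι hmem).symm
    _ = c • ι := by
      rw [← hc]
      ext x
      exact map_smul_of_tower ι c x

theorem finrank_end_eq_two_of_comp_eq_zero
    (hT : Function.Surjective (algebraMap F (Module.End A T)))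
    {π : M →ₗ[A] T} (hπ : Function.Surjective π)
    (hhead : ∀ N : Submodule A M, N ≠ ⊤ → N ≤ ker π)
    {ι : T →ₗ[A] M} (hι : Function.Injective ι) (hsoc : ∀ N : Submodule A M, N ≠ ⊥ → range ι ≤ N)
    (hπι : π ∘ₗ ι = 0) (hker : ∀ ψ : M →ₗ[A] M, π ∘ₗ ψ = 0 → ker π ≤ ker ψ) :
    Module.finrank F (M →ₗ[A] M) = 2 := by
  have hspan (φ : M →ₗ[A] M) : ∃ a b : F, a • LinearMap.id + b • (ι ∘ₗ π) = φ := by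
    obtain ⟨a, ha⟩ := exists_eq_smul_of_forall_le_ker hT hπ hhead (π ∘ₗ φ)
    have hψ : π ∘ₗ (φ - a • LinearMap.id) = 0 := by
      rw [comp_sub, ha, comp_smul, comp_id, sub_self]
    obtain ⟨g, hg⟩ := exists_comp_eq_of_ker_le_ker hπ (hker _ hψ)
    obtain ⟨b, rfl⟩ := exists_eq_smul_of_forall_range_le hT hι hsoc g
    exact ⟨a, b, by rw [← smul_comp, hg, add_sub_cancel]⟩
  have hli : LinearIndependent F ![LinearMap.id, ι ∘ₗ π] := by
    have : Nontrivial T := IsSimpleModule.nontrivial A T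
    obtain ⟨t, ht⟩ := exists_ne (0 : T)
    obtain ⟨m, rfl⟩ := hπ t
    have hιm : ι (π m) ≠ 0 := (map_ne_zero_iff ι hι).mpr ht
    have hπιm : π (ι (π m)) = 0 := congr($hπι (π m))
    rw [LinearIndependent.pair_iff]
    intro a b hab
    have ha : a = 0 := by
      have h : a • ι (π m) + b • ι (π (ι (π m))) = 0 := congr($hab (ι (π m)))
      simpa [hπιm, hιm] using h
    have h : a • m + b • ι (π m) = 0 := congr($hab m)
    exact ⟨ha, by simpa [ha, hιm] using h⟩
  have htop : Submodule.span F (Set.range ![LinearMap.id, ι ∘ₗ π]) = ⊤ := by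
    rw [Matrix.range_cons_cons_empty, Submodule.eq_top_iff']
    exact fun φ => Submodule.mem_span_pair.mpr (hspan φ)
  rw [← finrank_top, ← htop, finrank_span_eq_card hli, Fintype.card_fin]

end ScalarEndomorphisms

section TrivialModule

/-- The trivial one-dimensional `MonoidAlgebra F G`-module: a copy of the field `F` on which the
monoid algebra acts through its augmentation `MonoidAlgebra F G → F`. It is a type synonym so that
`F` itself does not acquire a new module structure. -/
def TrivialModule (F _G : Type*) : Type _ := F

variable {F G : Type*} [Field F]

namespace TrivialModule

instance : AddCommGroup (TrivialModule F G) := inferInstanceAs (AddCommGroup F)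

instance : Module F (TrivialModule F G) := inferInstanceAs (Module F F)

theorem finrank_eq_one : Module.finrank F (TrivialModule F G) = 1 :=
  Module.finrank_self F

variable [Monoid G]

noncomputable instance : Module (MonoidAlgebra F G) (TrivialModule F G) :=
  .compHom (TrivialModule F G) (MonoidAlgebra.lift F F G 1).toRingHom

theorem smul_def (r : MonoidAlgebra F G) (x : TrivialModule F G) :
    r • x = MonoidAlgebra.lift F F G 1 r • x :=
  rfl

instance : IsScalarTower F (MonoidAlgebra F G) (TrivialModule F G) where
  smul_assoc c r x := by rw [smul_def, smul_def, map_smul, smul_assoc]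

instance : IsSimpleModule (MonoidAlgebra F G) (TrivialModule F G) :=
  (isSimpleModule_iff ..).mpr (is_simple_module_of_finrank_eq_one finrank_eq_one)

theorem of_smul (g : G) (x : TrivialModule F G) : MonoidAlgebra.of F G g • x = x := by
  rw [smul_def, MonoidAlgebra.lift_of, MonoidHom.one_apply, one_smul]

end TrivialModule

variable [Monoid G] {M : Type*} [AddCommGroup M] [Module F M] [Module (MonoidAlgebra F G) M]
  [IsScalarTower F (MonoidAlgebra F G) M]

theorem nonempty_equiv_trivialModule_iff [IsSimpleModule (MonoidAlgebra F G) M] :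
    Nonempty (M ≃ₗ[MonoidAlgebra F G] TrivialModule F G) ↔
      ∀ v : M, ∀ g : G, MonoidAlgebra.of F G g • v = v := by
  constructor
  · rintro ⟨e⟩ v g
    exact e.injective (by rw [map_smul, TrivialModule.of_smul])
  · intro h
    have : Nontrivial M := IsSimpleModule.nontrivial (MonoidAlgebra F G) M
    obtain ⟨v, hv⟩ := exists_ne (0 : M)
    let l : TrivialModule F G →ₗ[F] M := toSpanSingleton F M v
    let f : TrivialModule F G →ₗ[MonoidAlgebra F G] M :=
      MonoidAlgebra.equivariantOfLinearOfComm l fun g x => by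
        simp only [← MonoidAlgebra.of_apply, TrivialModule.of_smul, h]
    have hf : f ≠ 0 := fun h0 => hv ((one_smul F v).symm.trans congr($h0 (1 : F)))
    exact ⟨(LinearEquiv.ofBijective f (bijective_of_ne_zero hf)).symm⟩

theorem nonempty_quotient_equiv_trivialModule_iff {P : Submodule (MonoidAlgebra F G) M}
    (hP : IsCoatom P) :
    Nonempty ((M ⧸ P) ≃ₗ[MonoidAlgebra F G] TrivialModule F G) ↔
      ∀ v : M, ∀ g : G, MonoidAlgebra.of F G g • v - v ∈ P := by
  have : IsSimpleModule (MonoidAlgebra F G) (M ⧸ P) := isSimpleModule_iff_isCoatom.mpr hP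
  rw [nonempty_equiv_trivialModule_iff, P.mkQ_surjective.forall]
  simp only [Submodule.mkQ_apply, ← Submodule.Quotient.mk_smul, Submodule.Quotient.eq]

theorem hasFactor_trivialModule_iff {a b : Submodule (MonoidAlgebra F G) M} (hab : a ⋖ b) :
    HasFactor (TrivialModule F G) a b ↔ ∀ v ∈ b, ∀ g : G, MonoidAlgebra.of F G g • v - v ∈ a := by
  have hcoatom : IsCoatom (a.comap b.subtype) :=
    isSimpleModule_iff_isCoatom.mp ((covBy_iff_quot_is_simple hab.le).mp hab)
  exact (nonempty_quotient_equiv_trivialModule_iff hcoatom).trans Subtype.forall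

theorem nonempty_atom_equiv_trivialModule_iff {S : Submodule (MonoidAlgebra F G) M}
    (hS : IsAtom S) :
    Nonempty (S ≃ₗ[MonoidAlgebra F G] TrivialModule F G) ↔
      ∀ v ∈ S, ∀ g : G, MonoidAlgebra.of F G g • v = v := by
  have : IsSimpleModule (MonoidAlgebra F G) S := isSimpleModule_iff_isAtom.mpr hS
  simp only [nonempty_equiv_trivialModule_iff, Subtype.forall, Subtype.ext_iff,
    Submodule.coe_smul]

theorem compositionMultiplicity_trivialModule
    (s : CompositionSeries (Submodule (MonoidAlgebra F G) M)) :
    compositionMultiplicity (TrivialModule F G) s =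
      Nat.card {i : Fin s.length //
        ∀ v ∈ s i.succ, ∀ g : G, MonoidAlgebra.of F G g • v - v ∈ s i.castSucc} :=
  Nat.card_congr (Equiv.subtypeEquivRight fun i => hasFactor_trivialModule_iff (s.step i))

end TrivialModule

theorem stmt19_general (F A M T : Type*) [Field F] [Ring A] [Algebra F A]
    [AddCommGroup M] [Module A M] [Module F M] [IsScalarTower F A M]
    [AddCommGroup T] [Module A T] [Module F T] [IsScalarTower F A T]
    (hT : Function.Surjective (algebraMap F (Module.End A T)))
    (hsoc : ∃! S : Submodule A M, IsAtom S)
    (hsoc' : ∀ S : Submodule A M, IsAtom S → Nonempty (S ≃ₗ[A] T))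
    (htop : ∃! P : Submodule A M, IsCoatom P)
    (htop' : ∀ P : Submodule A M, IsCoatom P → Nonempty ((M ⧸ P) ≃ₗ[A] T))
    (hcomp : ∃ s : CompositionSeries (Submodule A M),
      s.head = ⊥ ∧ s.last = ⊤ ∧ compositionMultiplicity T s = 2) :
    Module.finrank F (M →ₗ[A] M) = 2 := by
  obtain ⟨s, h0, h1, hs⟩ := hcomp
  obtain ⟨_, _⟩ := isFiniteLength_iff_isNoetherian_isArtinian.mp
    (isFiniteLength_of_exists_compositionSeries ⟨s, h0, h1⟩)
  obtain ⟨S, hS⟩ := hsoc.exists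
  obtain ⟨P, hP⟩ := htop.exists
  obtain ⟨eS⟩ := hsoc' S hS
  obtain ⟨eP⟩ := htop' P hP
  have : IsSimpleModule A S := isSimpleModule_iff_isAtom.mpr hS
  have : IsSimpleModule A T := .congr eS.symm
  let ι : T →ₗ[A] M := S.subtype ∘ₗ eS.symm
  let π : M →ₗ[A] T := eP ∘ₗ P.mkQ
  have hι : Function.Injective ι := S.subtype_injective.comp eS.symm.injective
  have hπ : Function.Surjective π := eP.surjective.comp P.mkQ_surjective
  have hrange : range ι = S := by simp [ι, range_comp]
  have hker : ker π = P := by simp [π]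
  have hrange_le (N : Submodule A M) (hN : N ≠ ⊥) : range ι ≤ N :=
    hrange.trans_le (le_of_existsUnique_isAtom hsoc hS hN)
  have hle_ker (N : Submodule A M) (hN : N ≠ ⊤) : N ≤ ker π :=
    (le_of_existsUnique_isCoatom htop hP hN).trans_eq hker.symm
  exact finrank_end_eq_two_of_comp_eq_zero hT hπ hle_ker hι hrange_le
    (comp_eq_zero_of_one_lt_compositionMultiplicity hπ hrange_le s (by omega))
    fun ψ => ker_le_ker_of_comp_eq_zero hπ hle_ker hι hrange_le s h0 h1 hs.le

theorem stmt19 (F : Type*) [Field F] [IsAlgClosed F]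
    (G : Type*) [Group G] [Finite G]
    (M : Type*) [AddCommGroup M] [Module (MonoidAlgebra F G) M]
    [Module F M] [IsScalarTower F (MonoidAlgebra F G) M]
    [SMulCommClass (MonoidAlgebra F G) F M]
    [FiniteDimensional F M] [Nontrivial M]
    -- `M` is indecomposable
    (hind : ¬ ∃ U V : Submodule (MonoidAlgebra F G) M, U ≠ ⊥ ∧ V ≠ ⊥ ∧ IsCompl U V)
    -- (a) `M` has a unique simple submodule, which is trivial (so `soc M ≅ F`) …
    (hsoc : ∃! S : Submodule (MonoidAlgebra F G) M, IsAtom S)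
    (hsoc' : ∀ S : Submodule (MonoidAlgebra F G) M, IsAtom S →
      ∀ v ∈ S, ∀ g : G, (MonoidAlgebra.of F G g) • v = v)
    -- … and a unique maximal proper submodule, with trivial quotient (so `top M ≅ F`)
    (htop : ∃! P : Submodule (MonoidAlgebra F G) M, IsCoatom P)
    (htop' : ∀ P : Submodule (MonoidAlgebra F G) M, IsCoatom P →
      ∀ v : M, ∀ g : G, (MonoidAlgebra.of F G g) • v - v ∈ P)
    -- (b) in a composition series of `M` the trivial module occurs exactly twice
    (hcomp : ∃ s : CompositionSeries (Submodule (MonoidAlgebra F G) M),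
      s.head = ⊥ ∧ s.last = ⊤ ∧
        Nat.card {i : Fin s.length //
          ∀ v ∈ s i.succ, ∀ g : G, (MonoidAlgebra.of F G g) • v - v ∈ s i.castSucc} = 2) :
    Module.finrank F (M →ₗ[MonoidAlgebra F G] M) = 2 :=
  stmt19_general F (MonoidAlgebra F G) M (TrivialModule F G)
    (algebraMap_end_surjective_of_finrank_eq_one TrivialModule.finrank_eq_one)
    hsoc (fun S hS => (nonempty_atom_equiv_trivialModule_iff hS).mpr (hsoc' S hS))
    htop (fun P hP => (nonempty_quotient_equiv_trivialModule_iff hP).mpr (htop' P hP))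
    (by simpa only [compositionMultiplicity_trivialModule] using hcomp)
end
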